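/- arXiv:0711.4229 — 3 statements merged into one kernel-verified Lean document; each statement's English description precedes it below -/
import Mathlib

section
/- If J is an object of C such that the ring End(J ⊗ J) is commutative, then J is ambidextrous. -/
open CategoryTheory MonoidalCategory

namespace RibbonPaper

/-- A twist (balancing/ribbon structure) on a braided category with right duals:
a natural family of isomorphisms `θ V : V ⟶ V` satisfying
`θ (V ⊗ W) = c_{W,V} ∘ c_{V,W} ∘ (θ V ⊗ θ W)` and `θ (Vᘁ) = (θ V)ᘁ`. -/
structure Twist (C : Type*) [Category C] [MonoidalCategory C] [BraidedCategory C]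
    [RightRigidCategory C] where
  θ : ∀ V : C, V ⟶ V
  isIso : ∀ V : C, IsIso (θ V)
  natural : ∀ {V W : C} (f : V ⟶ W), f ≫ θ W = θ V ≫ f
  tensor : ∀ V W : C, θ (V ⊗ W) = (θ V ⊗ₘ θ W) ≫ (β_ V W).hom ≫ (β_ W V).hom
  dual : ∀ V : C, θ (Vᘁ) = (θ V)ᘁ

variable {C : Type*} [Category C] [MonoidalCategory C] [BraidedCategory C]
  [Preadditive C] [MonoidalPreadditive C] [RightRigidCategory C]

variable (T : Twist C)

/-- The modified evaluation `d'_V := d_V ∘ c_{V,V*} ∘ (θ_V ⊗ id_{V*})`. -/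
def dP (V : C) : V ⊗ Vᘁ ⟶ 𝟙_ C :=
  (T.θ V ⊗ₘ 𝟙 (Vᘁ)) ≫ (β_ V (Vᘁ)).hom ≫ ε_ V (Vᘁ)

/-- The modified coevaluation `b'_V := (id_{V*} ⊗ θ_V) ∘ c_{V,V*} ∘ b_V`. -/
def bP (V : C) : 𝟙_ C ⟶ Vᘁ ⊗ V :=
  η_ V (Vᘁ) ≫ (β_ V (Vᘁ)).hom ≫ (𝟙 (Vᘁ) ⊗ₘ T.θ V)

/-- The partial right trace `⟨f⟩_R`-endomorphism:
`(id_U ⊗ d'_V) ∘ (f ⊗ id_{V*}) ∘ (id_U ⊗ b_V) : U ⟶ U`. -/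
def ptrR {U V : C} (f : U ⊗ V ⟶ U ⊗ V) : U ⟶ U :=
  (ρ_ U).inv ≫ (U ◁ η_ V (Vᘁ)) ≫ (α_ U V (Vᘁ)).inv ≫ (f ▷ (Vᘁ)) ≫
    (α_ U V (Vᘁ)).hom ≫ (U ◁ dP T V) ≫ (ρ_ U).hom

/-- The partial left trace `⟨f⟩_L`-endomorphism:
`(d_U ⊗ id_V) ∘ (id_{U*} ⊗ f) ∘ (b'_U ⊗ id_V) : V ⟶ V`. -/
def ptrL {U V : C} (f : U ⊗ V ⟶ U ⊗ V) : V ⟶ V :=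
  (λ_ V).inv ≫ (bP T U ▷ V) ≫ (α_ (Uᘁ) U V).hom ≫ ((Uᘁ) ◁ f) ≫
    (α_ (Uᘁ) U V).inv ≫ (ε_ U (Uᘁ) ▷ V) ≫ (λ_ V).hom

/-- An object `V` is ambidextrous if `tr_L f = tr_R f` for all `f : V ⊗ V ⟶ V ⊗ V`. -/
def Ambidextrous (V : C) : Prop := ∀ f : V ⊗ V ⟶ V ⊗ V, ptrL T f = ptrR T f

/-- The categorical trace `tr_C(f) := d'_V ∘ (f ⊗ id_{V*}) ∘ b_V ∈ K = End(𝟙)`. -/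
def trC {V : C} (f : V ⟶ V) : 𝟙_ C ⟶ 𝟙_ C :=
  η_ V (Vᘁ) ≫ (f ▷ (Vᘁ)) ≫ dP T V

/-- The categorical (quantum) dimension `dim V := tr_C(id_V)`. -/
def qdim (V : C) : 𝟙_ C ⟶ 𝟙_ C := trC T (𝟙 V)

/-- The action of `K = End(𝟙)` on Hom-groups: `k • f := k ⊗ f` (up to unitors). -/
def smul {V W : C} (k : 𝟙_ C ⟶ 𝟙_ C) (f : V ⟶ W) : V ⟶ W :=
  (λ_ V).inv ≫ (k ⊗ₘ f) ≫ (λ_ W).hom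

/-- `V` is simple if `End(V) = K ⋅ id_V`. -/
def IsSimple (V : C) : Prop := ∀ f : V ⟶ V, ∃ k : 𝟙_ C ⟶ 𝟙_ C, f = smul k (𝟙 V)

/-- The endomorphism of `Y` computing `S'(X,Y)`:
`(id_Y ⊗ d'_X) ∘ ((c_{X,Y} ∘ c_{Y,X}) ⊗ id_{X*}) ∘ (id_Y ⊗ b_X)`. -/
def SMap (X Y : C) : Y ⟶ Y := ptrR T ((β_ Y X).hom ≫ (β_ X Y).hom)

/-- `V ∈ A(J)`: `V` is simple and `S'(J,V) ≠ 0`. -/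
def InA (J V : C) : Prop :=
  IsSimple V ∧ ∃ s : 𝟙_ C ⟶ 𝟙_ C, SMap T J V = smul s (𝟙 V) ∧ s ≠ 0

/-!
Pulling the closing strand of a left partial trace through the diagram turns it into a right
partial trace of the conjugate by the braiding: `tr_L(f) = tr_R(c⁻¹ ∘ f ∘ c)`. The twist sits on
the cup of `tr_L` but on the cap of `tr_R`; taking its dual moves it onto the closing strand, along
which it slides from one end to the other. When `c_{J,J}` is central in `End(J ⊗ J)` the
conjugation is trivial.
-/

section PartialTrace

variable {D : Type*} [Category D] [MonoidalCategory D]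

/-- The partial trace of `f` over its left tensor factor, closed up on the left by a strand
coloured `X` with cup `b` and cap `d`. These are arbitrary rather than the duality maps of `X`, so
that a twist can be absorbed into either of them. -/
def leftPartialTrace {U₁ U₂ V₁ V₂ X : D} (b : 𝟙_ D ⟶ X ⊗ U₁) (d : X ⊗ U₂ ⟶ 𝟙_ D)
    (f : U₁ ⊗ V₁ ⟶ U₂ ⊗ V₂) : V₁ ⟶ V₂ :=
  (λ_ V₁).inv ≫ b ▷ V₁ ≫ (α_ X U₁ V₁).hom ≫ X ◁ f ≫ (α_ X U₂ V₂).inv ≫ d ▷ V₂ ≫ (λ_ V₂).hom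

/-- The partial trace of `f` over its right tensor factor, closed up on the right by a strand
coloured `X` with cup `b` and cap `d`; the mirror image of `leftPartialTrace`. -/
def rightPartialTrace {U₁ U₂ V₁ V₂ X : D} (b : 𝟙_ D ⟶ U₁ ⊗ X) (d : U₂ ⊗ X ⟶ 𝟙_ D)
    (f : V₁ ⊗ U₁ ⟶ V₂ ⊗ U₂) : V₁ ⟶ V₂ :=
  (ρ_ V₁).inv ≫ V₁ ◁ b ≫ (α_ V₁ U₁ X).inv ≫ f ▷ X ≫ (α_ V₂ U₂ X).hom ≫ V₂ ◁ d ≫ (ρ_ V₂).hom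

theorem rightPartialTrace_comp_whiskerLeft {U₁ U₂ V₁ V₂ X Y : D} (b : 𝟙_ D ⟶ U₁ ⊗ X)
    (φ : X ⟶ Y) (d : U₂ ⊗ Y ⟶ 𝟙_ D) (f : V₁ ⊗ U₁ ⟶ V₂ ⊗ U₂) :
    rightPartialTrace (b ≫ U₁ ◁ φ) d f = rightPartialTrace b (U₂ ◁ φ ≫ d) f := by
  have interchange : V₁ ◁ U₁ ◁ φ ≫ (α_ V₁ U₁ Y).inv ≫ f ▷ Y ≫ (α_ V₂ U₂ Y).hom =
      (α_ V₁ U₁ X).inv ≫ f ▷ X ≫ (α_ V₂ U₂ X).hom ≫ V₂ ◁ U₂ ◁ φ := by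
    rw [associator_inv_naturality_right_assoc, whisker_exchange_assoc,
      associator_naturality_right]
  simp only [rightPartialTrace, MonoidalCategory.whiskerLeft_comp, Category.assoc,
    reassoc_of% interchange]

variable [BraidedCategory D]

theorem whiskerRight_cup_comp_braiding_inv {U V X : D} (b : 𝟙_ D ⟶ U ⊗ X) :
    (λ_ V).inv ≫ (b ≫ (β_ U X).hom) ▷ V ≫ (α_ X U V).hom ≫ (β_ (U ⊗ V) X).inv =
      (ρ_ V).inv ≫ V ◁ b ≫ (α_ V U X).inv ≫ (β_ V U).hom ▷ X := by
  have cup_naturality : (λ_ V).inv ≫ b ▷ V = (ρ_ V).inv ≫ V ◁ b ≫ (β_ V (U ⊗ X)).hom := by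
    rw [BraidedCategory.braiding_naturality_right]
    simp
  have hexagon : (β_ V (U ⊗ X)).hom ≫ (β_ U X).hom ▷ V ≫ (α_ X U V).hom ≫
      (β_ (U ⊗ V) X).inv = (α_ V U X).inv ≫ (β_ V U).hom ▷ X := by
    simp [← comp_whiskerRight_assoc, ← MonoidalCategory.whiskerLeft_comp_assoc]
  rw [comp_whiskerRight_assoc, reassoc_of% cup_naturality, hexagon]

theorem braiding_comp_whiskerRight_cap {U V X : D} (d : X ⊗ U ⟶ 𝟙_ D) :
    (β_ (U ⊗ V) X).hom ≫ (α_ X U V).inv ≫ d ▷ V ≫ (λ_ V).hom =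
      (β_ V U).inv ▷ X ≫ (α_ V U X).hom ≫ V ◁ ((β_ U X).hom ≫ d) ≫ (ρ_ V).hom := by
  have hexagon : (β_ (U ⊗ V) X).hom ≫ (α_ X U V).inv = (β_ V U).inv ▷ X ≫
      (α_ V U X).hom ≫ V ◁ (β_ U X).hom ≫ (β_ V (X ⊗ U)).hom := by
    rw [BraidedCategory.braiding_naturality_right]
    simp [← comp_whiskerRight_assoc]
  have cap_naturality : (β_ V (X ⊗ U)).hom ≫ d ▷ V ≫ (λ_ V).hom = V ◁ d ≫ (ρ_ V).hom := by
    rw [← BraidedCategory.braiding_naturality_right_assoc]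
    simp
  rw [reassoc_of% hexagon, cap_naturality, whiskerLeft_comp_assoc]

theorem leftPartialTrace_comp_braiding {U₁ U₂ V₁ V₂ X : D} (b : 𝟙_ D ⟶ U₁ ⊗ X)
    (d : X ⊗ U₂ ⟶ 𝟙_ D) (f : U₁ ⊗ V₁ ⟶ U₂ ⊗ V₂) :
    leftPartialTrace (b ≫ (β_ U₁ X).hom) d f =
      rightPartialTrace b ((β_ U₂ X).hom ≫ d) ((β_ V₁ U₁).hom ≫ f ≫ (β_ V₂ U₂).inv) := by
  have pull_through : X ◁ f = (β_ (U₁ ⊗ V₁) X).inv ≫ f ▷ X ≫ (β_ (U₂ ⊗ V₂) X).hom := by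
    rw [BraidedCategory.braiding_naturality_left, Iso.inv_hom_id_assoc]
  calc leftPartialTrace (b ≫ (β_ U₁ X).hom) d f
    _ = ((λ_ V₁).inv ≫ (b ≫ (β_ U₁ X).hom) ▷ V₁ ≫ (α_ X U₁ V₁).hom ≫ (β_ (U₁ ⊗ V₁) X).inv) ≫
          f ▷ X ≫ (β_ (U₂ ⊗ V₂) X).hom ≫ (α_ X U₂ V₂).inv ≫ d ▷ V₂ ≫ (λ_ V₂).hom := by
      simp only [leftPartialTrace, pull_through, Category.assoc]
    _ = ((ρ_ V₁).inv ≫ V₁ ◁ b ≫ (α_ V₁ U₁ X).inv ≫ (β_ V₁ U₁).hom ▷ X) ≫ f ▷ X ≫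
          (β_ V₂ U₂).inv ▷ X ≫ (α_ V₂ U₂ X).hom ≫ V₂ ◁ ((β_ U₂ X).hom ≫ d) ≫ (ρ_ V₂).hom := by
      rw [whiskerRight_cup_comp_braiding_inv, braiding_comp_whiskerRight_cap]
    _ = rightPartialTrace b ((β_ U₂ X).hom ≫ d) ((β_ V₁ U₁).hom ≫ f ≫ (β_ V₂ U₂).inv) := by
      simp only [rightPartialTrace, comp_whiskerRight, Category.assoc]

end PartialTrace

section Twist

variable {D : Type*} [Category D] [MonoidalCategory D] [BraidedCategory D]
  [RightRigidCategory D] (T : Twist D)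

theorem bP_eq_whiskerLeft_rightAdjointMate (V : D) :
    bP T V = (η_ V (Vᘁ) ≫ V ◁ (T.θ V)ᘁ) ≫ (β_ V (Vᘁ)).hom := by
  rw [bP, id_tensorHom, ← BraidedCategory.braiding_naturality_left,
    coevaluation_comp_rightAdjointMate, Category.assoc]

theorem dP_eq_whiskerLeft_rightAdjointMate (V : D) :
    dP T V = V ◁ (T.θ V)ᘁ ≫ (β_ V (Vᘁ)).hom ≫ ε_ V (Vᘁ) := by
  rw [dP, tensorHom_id, BraidedCategory.braiding_naturality_left_assoc,
    ← rightAdjointMate_comp_evaluation, BraidedCategory.braiding_naturality_right_assoc]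

theorem ptrL_eq_ptrR_braiding_conj {U V : D} (f : U ⊗ V ⟶ U ⊗ V) :
    ptrL T f = ptrR T ((β_ V U).hom ≫ f ≫ (β_ V U).inv) :=
  calc ptrL T f
    _ = leftPartialTrace (bP T U) (ε_ U (Uᘁ)) f := rfl
    _ = rightPartialTrace (η_ U (Uᘁ) ≫ U ◁ (T.θ U)ᘁ) ((β_ U (Uᘁ)).hom ≫ ε_ U (Uᘁ))
          ((β_ V U).hom ≫ f ≫ (β_ V U).inv) := by
      rw [bP_eq_whiskerLeft_rightAdjointMate, leftPartialTrace_comp_braiding]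
    _ = rightPartialTrace (η_ U (Uᘁ)) (dP T U) ((β_ V U).hom ≫ f ≫ (β_ V U).inv) := by
      rw [rightPartialTrace_comp_whiskerLeft, dP_eq_whiskerLeft_rightAdjointMate]
    _ = ptrR T ((β_ V U).hom ≫ f ≫ (β_ V U).inv) := rfl

theorem statement3_general (J : D)
    (h : ∀ f : J ⊗ J ⟶ J ⊗ J, (β_ J J).hom ≫ f = f ≫ (β_ J J).hom) :
    Ambidextrous T J := fun f =>
  calc ptrL T f
    _ = ptrR T ((β_ J J).hom ≫ f ≫ (β_ J J).inv) := ptrL_eq_ptrR_braiding_conj T f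
    _ = ptrR T f := by rw [reassoc_of% h f, Iso.hom_inv_id, Category.comp_id]

end Twist

/-- If the ring `End(J ⊗ J)` is commutative, then `J` is
ambidextrous. -/
theorem statement3 (J : C)
    (h : ∀ g g' : J ⊗ J ⟶ J ⊗ J, g ≫ g' = g' ≫ g) :
    Ambidextrous T J :=
  statement3_general T J (h _)

end RibbonPaper
end

section
/- For any two simple objects V and J of C one has S'(V,J)·dim(J) = S'(J,V)·dim(V) in K (both sides compute the invariant of the Hopf link with components colored V and J). -/
/-!
Closing a strand with the braiding alone gives a trace which is cyclic in any braided category, but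
which sees the framing: closing two parallel strands one after the other differs from closing them
together by the double braiding of the strands. The twist on `U ⊗ V` absorbs exactly this double
braiding, so the twisted trace of a right partial trace is the twisted trace over `U ⊗ V`.
Hence the trace of the endomorphism computing `S'(V, J)` is the trace over `J ⊗ V` of the composite
of the two crossings of the Hopf link, and cyclicity moves the first crossing behind the second,
which turns it into the trace computing `S'(J, V)`.
-/

open CategoryTheory MonoidalCategory

namespace RibbonPaper

variable {C : Type*} [Category C] [MonoidalCategory C] [BraidedCategory C]
  [Preadditive C] [MonoidalPreadditive C] [RightRigidCategory C]

variable (T : Twist C)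

section Braided

variable {D : Type*} [Category D] [MonoidalCategory D]

theorem exists_exactPairing_mate {X X' Y Y' : D} [ExactPairing X Y] [ExactPairing X' Y']
    (g : X ⟶ X') :
    ∃ g' : Y' ⟶ Y, η_ X' Y' ≫ X' ◁ g' = η_ X Y ≫ g ▷ Y ∧
      g' ▷ X ≫ ε_ X Y = Y' ◁ g ≫ ε_ X' Y' :=
  letI : HasRightDual X := ⟨Y⟩
  letI : HasRightDual X' := ⟨Y'⟩
  ⟨gᘁ, coevaluation_comp_rightAdjointMate g, rightAdjointMate_comp_evaluation g⟩

theorem tensor_evaluation_eq_nested (U V U' V' : D) [ExactPairing U U'] [ExactPairing V V'] :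
    (α_ (V' ⊗ U') U V).hom ≫ ε_ (U ⊗ V) (V' ⊗ U') =
      ((α_ V' U' U).hom ≫ V' ◁ ε_ U U' ≫ (ρ_ V').hom) ▷ V ≫ ε_ V V' := by
  rw [ExactPairing.tensor_evaluation]
  monoidal

theorem contraction_comm {A B U U' : D} (δ : A ⊗ B ⟶ 𝟙_ D)
    (e : U' ⊗ U ⟶ 𝟙_ D) :
    (α_ A (B ⊗ U') U).hom ≫ A ◁ ((α_ B U' U).hom ≫ B ◁ e ≫ (ρ_ B).hom) ≫ δ =
      ((α_ A B U').inv ≫ δ ▷ U' ≫ (λ_ U').hom) ▷ U ≫ e :=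
  calc
    _ = 𝟙 _ ⊗≫ ((A ⊗ B) ◁ e ≫ δ ▷ 𝟙_ D) ⊗≫ 𝟙 _ := by monoidal
    _ = _ := by rw [whisker_exchange]; monoidal

variable [BraidedCategory D]

theorem double_braiding_comp_braiding (U V W : D) :
    ((β_ U V).hom ≫ (β_ V U).hom) ▷ W ≫ (β_ (U ⊗ V) W).hom =
      (α_ U V W).hom ≫ (β_ U (V ⊗ W)).hom ≫ (α_ V W U).hom ≫ (β_ V (W ⊗ U)).hom ≫
        (α_ W U V).hom := by
  rw [comp_whiskerRight, Category.assoc, BraidedCategory.braiding_naturality_left]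
  simp

/-- The closure of `f` by the braiding alone, without the twist that `trC` inserts. It is defined
for any dual `Y` of `X`, since the dual of `U ⊗ V` that occurs below is `V* ⊗ U*`. -/
def braidedTrace {X : D} (Y : D) [ExactPairing X Y] (f : X ⟶ X) : 𝟙_ D ⟶ 𝟙_ D :=
  η_ X Y ≫ f ▷ Y ≫ (β_ X Y).hom ≫ ε_ X Y

/-- The closure of the right strand of `f` by the braiding alone, without the twist that `ptrR`
inserts. -/
def braidedPartialTrace {U V W : D} (V' : D) [ExactPairing V V'] (f : U ⊗ V ⟶ W ⊗ V) : U ⟶ W :=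
  (ρ_ U).inv ≫ U ◁ η_ V V' ≫ (α_ U V V').inv ≫ f ▷ V' ≫ (α_ W V V').hom ≫
    W ◁ ((β_ V V').hom ≫ ε_ V V') ≫ (ρ_ W).hom

theorem braidedTrace_comp_comm {X X' : D} (Y Y' : D) [ExactPairing X Y] [ExactPairing X' Y']
    (g : X ⟶ X') (h : X' ⟶ X) :
    braidedTrace Y (g ≫ h) = braidedTrace Y' (h ≫ g) := by
  obtain ⟨g', hη, hε⟩ := exists_exactPairing_mate (Y := Y) (Y' := Y') g
  calc
    braidedTrace Y (g ≫ h) = (η_ X Y ≫ g ▷ Y) ≫ h ▷ Y ≫ (β_ X Y).hom ≫ ε_ X Y := by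
      simp only [braidedTrace, comp_whiskerRight, Category.assoc]
    _ = η_ X' Y' ≫ h ▷ Y' ≫ (β_ X Y').hom ≫ g' ▷ X ≫ ε_ X Y := by
      rw [← hη, Category.assoc, whisker_exchange_assoc,
        BraidedCategory.braiding_naturality_right_assoc]
    _ = braidedTrace Y' (h ≫ g) := by
      rw [hε, ← BraidedCategory.braiding_naturality_left_assoc, braidedTrace,
        comp_whiskerRight_assoc]

theorem braidedPartialTrace_comp_whiskerRight {U V W Z : D} (V' : D) [ExactPairing V V']
    (f : U ⊗ V ⟶ W ⊗ V) (g : W ⟶ Z) :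
    braidedPartialTrace V' (f ≫ g ▷ V) = braidedPartialTrace V' f ≫ g := by
  have slide (δ : V ⊗ V' ⟶ 𝟙_ D) :
      g ▷ V ▷ V' ≫ (α_ Z V V').hom ≫ Z ◁ δ ≫ (ρ_ Z).hom =
        (α_ W V V').hom ≫ W ◁ δ ≫ (ρ_ W).hom ≫ g := by
    rw [associator_naturality_left_assoc, ← whisker_exchange_assoc, rightUnitor_naturality]
  simp only [braidedPartialTrace, comp_whiskerRight, Category.assoc, slide]

theorem double_braiding_comp_evaluation (U V U' V' : D) [ExactPairing U U'] [ExactPairing V V'] :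
    ((β_ U V).hom ≫ (β_ V U).hom) ▷ (V' ⊗ U') ≫ (β_ (U ⊗ V) (V' ⊗ U')).hom ≫
        ε_ (U ⊗ V) (V' ⊗ U') =
      (α_ U V (V' ⊗ U')).hom ≫ U ◁ ((α_ V V' U').inv ≫
        ((β_ V V').hom ≫ ε_ V V') ▷ U' ≫ (λ_ U').hom) ≫ (β_ U U').hom ≫ ε_ U U' := by
  rw [← Category.assoc, double_braiding_comp_braiding]
  simp only [Category.assoc]
  rw [tensor_evaluation_eq_nested, ← BraidedCategory.braiding_naturality_right_assoc,
    contraction_comm, ← BraidedCategory.braiding_naturality_right_assoc]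

theorem braidedTrace_braidedPartialTrace {U V : D} (U' V' : D) [ExactPairing U U']
    [ExactPairing V V'] (f : U ⊗ V ⟶ U ⊗ V) :
    braidedTrace U' (braidedPartialTrace V' f) =
      braidedTrace (V' ⊗ U') (f ≫ (β_ U V).hom ≫ (β_ V U).hom) := by
  rw [braidedTrace, braidedTrace, comp_whiskerRight f, Category.assoc,
    double_braiding_comp_evaluation, ExactPairing.tensor_coevaluation, braidedPartialTrace]
  monoidal

end Braided

section Twisted

omit [Preadditive C] [MonoidalPreadditive C]

theorem trC_eq_braidedTrace {V : C} (f : V ⟶ V) : trC T f = braidedTrace (Vᘁ) (f ≫ T.θ V) := by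
  simp only [trC, dP, braidedTrace, tensorHom_id, comp_whiskerRight, Category.assoc]

theorem ptrR_eq_braidedPartialTrace {U V : C} (f : U ⊗ V ⟶ U ⊗ V) :
    ptrR T f = braidedPartialTrace (Vᘁ) (f ≫ U ◁ T.θ V) := by
  simp only [ptrR, dP, braidedPartialTrace, tensorHom_id, comp_whiskerRight, whiskerLeft_comp,
    whisker_assoc, Category.assoc, Iso.inv_hom_id_assoc]

theorem trC_ptrR {U V : C} (f : U ⊗ V ⟶ U ⊗ V) :
    trC T (ptrR T f) = braidedTrace (Vᘁ ⊗ Uᘁ) (f ≫ T.θ (U ⊗ V)) := by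
  rw [trC_eq_braidedTrace, ptrR_eq_braidedPartialTrace, ← braidedPartialTrace_comp_whiskerRight,
    braidedTrace_braidedPartialTrace, T.tensor, tensorHom_def']
  simp only [Category.assoc]

theorem trC_smul {X : C} (k : 𝟙_ C ⟶ 𝟙_ C) (f : X ⟶ X) : trC T (smul k f) = k ≫ trC T f := by
  have smul_whiskerRight : smul k f ▷ Xᘁ = 𝟙 _ ⊗≫ k ▷ (X ⊗ Xᘁ) ⊗≫ f ▷ Xᘁ := by
    rw [smul, MonoidalCategory.tensorHom_def]
    monoidal
  have coevaluation_comp_smul : η_ X (Xᘁ) ≫ smul k f ▷ Xᘁ = k ≫ η_ X (Xᘁ) ≫ f ▷ Xᘁ :=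
    calc
      _ = 𝟙 _ ⊗≫ (𝟙_ C ◁ η_ X (Xᘁ) ≫ k ▷ (X ⊗ Xᘁ)) ⊗≫ f ▷ Xᘁ := by
        rw [smul_whiskerRight]
        monoidal
      _ = _ := by
        rw [whisker_exchange]
        monoidal
  rw [trC, trC, reassoc_of% coevaluation_comp_smul]

theorem trC_sMap_comm (X Y : C) : trC T (SMap T X Y) = trC T (SMap T Y X) :=
  calc
    trC T (SMap T X Y) = braidedTrace (Xᘁ ⊗ Yᘁ) ((β_ Y X).hom ≫ (β_ X Y).hom ≫ T.θ (Y ⊗ X)) := by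
      rw [SMap, trC_ptrR, Category.assoc]
    _ = braidedTrace (Yᘁ ⊗ Xᘁ) (((β_ X Y).hom ≫ T.θ (Y ⊗ X)) ≫ (β_ Y X).hom) :=
      braidedTrace_comp_comm _ _ _ _
    _ = braidedTrace (Yᘁ ⊗ Xᘁ) (((β_ X Y).hom ≫ (β_ Y X).hom) ≫ T.θ (X ⊗ Y)) := by
      rw [Category.assoc, Category.assoc, T.natural]
    _ = trC T (SMap T Y X) := by
      rw [SMap, trC_ptrR]

theorem statement7_general (V J : C) (sVJ sJV : 𝟙_ C ⟶ 𝟙_ C)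
    (hsVJ : SMap T V J = smul sVJ (𝟙 J)) (hsJV : SMap T J V = smul sJV (𝟙 V)) :
    sVJ ≫ qdim T J = sJV ≫ qdim T V :=
  calc
    sVJ ≫ qdim T J = trC T (SMap T V J) := by rw [hsVJ, trC_smul, qdim]
    _ = trC T (SMap T J V) := trC_sMap_comm T V J
    _ = sJV ≫ qdim T V := by rw [hsJV, trC_smul, qdim]

end Twisted

/-- For simple objects `V` and `J`,
`S'(V,J)·dim(J) = S'(J,V)·dim(V)` in `K` (both sides compute the invariant of the
Hopf link with components colored `V` and `J`). -/
theorem statement7 (V J : C) (hV : IsSimple V) (hJ : IsSimple J)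
    (sVJ sJV : 𝟙_ C ⟶ 𝟙_ C)
    (hsVJ : SMap T V J = smul sVJ (𝟙 J))
    (hsJV : SMap T J V = smul sJV (𝟙 V)) :
    sVJ ≫ qdim T J = sJV ≫ qdim T V :=
  statement7_general T V J sVJ sJV hsVJ hsJV

end RibbonPaper
end

section
/- If an object J of C is ambidextrous, then its dual J* is ambidextrous. -/
open CategoryTheory MonoidalCategory

namespace RibbonPaper

variable {C : Type*} [Category C] [MonoidalCategory C] [BraidedCategory C]
  [Preadditive C] [MonoidalPreadditive C] [RightRigidCategory C]

variable (T : Twist C)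

/-! Transposition along a pairing `(Y, X)` exchanges the left and the right partial closures of an
endomorphism of `Y ⊗ Y`, and it is injective. The twist makes `(b'_J, d'_J)` a pairing of `J*` with
`J`; identifying `J` with `J**` along it turns the pair `(b, d)` of `J*` into `(b'_J, d'_J)` and
`(b', d')` of `J*` into `(b_J, d_J)`. Hence the traces over `J*` are the transposes of the traces
over `J`, with left and right exchanged. -/

section Closure

variable {D : Type*} [Category D] [MonoidalCategory D]

/-- The partial closure of the right tensor factor `V` of `f` by a cup `c` and a cap `e`, which
need not come from a duality; `ptrR` is the case `c = η_ V Vᘁ`, `e = dP T V`. -/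
def rightClosure {U U' V W : D} (c : 𝟙_ D ⟶ V ⊗ W) (e : V ⊗ W ⟶ 𝟙_ D)
    (f : U ⊗ V ⟶ U' ⊗ V) : U ⟶ U' :=
  (ρ_ U).inv ≫ U ◁ c ≫ (α_ U V W).inv ≫ f ▷ W ≫ (α_ U' V W).hom ≫ U' ◁ e ≫ (ρ_ U').hom

/-- The partial closure of the left tensor factor `U` of `f` by a cup `c` and a cap `e`, which
need not come from a duality; `ptrL` is the case `c = bP T U`, `e = ε_ U Uᘁ`. -/
def leftClosure {U V V' W : D} (c : 𝟙_ D ⟶ W ⊗ U) (e : W ⊗ U ⟶ 𝟙_ D)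
    (f : U ⊗ V ⟶ U ⊗ V') : V ⟶ V' :=
  (λ_ V).inv ≫ c ▷ V ≫ (α_ W U V).hom ≫ W ◁ f ≫ (α_ W U V').inv ≫ e ▷ V' ≫ (λ_ V').hom

theorem rightClosure_whiskerLeft_iso {U U' V W W' : D} (i : W ≅ W') (c : 𝟙_ D ⟶ V ⊗ W)
    (e : V ⊗ W ⟶ 𝟙_ D) (f : U ⊗ V ⟶ U' ⊗ V) :
    rightClosure (c ≫ V ◁ i.hom) (V ◁ i.inv ≫ e) f = rightClosure c e f := by
  have conj_eq : (U ⊗ V) ◁ i.hom ≫ f ▷ W' ≫ (U' ⊗ V) ◁ i.inv = f ▷ W := by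
    rw [whisker_exchange_assoc, whiskerLeft_hom_inv, Category.comp_id]
  simp only [rightClosure, ← conj_eq]
  monoidal

theorem leftClosure_whiskerRight_iso {U V V' W W' : D} (i : W ≅ W') (c : 𝟙_ D ⟶ W ⊗ U)
    (e : W ⊗ U ⟶ 𝟙_ D) (f : U ⊗ V ⟶ U ⊗ V') :
    leftClosure (c ≫ i.hom ▷ U) (i.inv ▷ U ≫ e) f = leftClosure c e f := by
  have conj_eq : i.hom ▷ (U ⊗ V) ≫ W' ◁ f ≫ i.inv ▷ (U ⊗ V') = W ◁ f := by
    rw [← whisker_exchange_assoc, hom_inv_whiskerRight, Category.comp_id]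
  simp only [leftClosure, ← conj_eq]
  monoidal

end Closure

section Transposition

variable {D : Type*} [Category D] [MonoidalCategory D]

theorem eq_rightAdjointMate_of_evaluation {X Y : D} [HasRightDual X] [HasRightDual Y]
    {f : X ⟶ Y} {g : Yᘁ ⟶ Xᘁ} (h : g ▷ X ≫ ε_ X Xᘁ = Yᘁ ◁ f ≫ ε_ Y Yᘁ) : g = fᘁ := by
  rw [← rightAdjointMate_comp_evaluation] at h
  simpa using congrArg (tensorRightHomEquiv _ X Xᘁ _) h

theorem eq_rightAdjointMate_of_coevaluation {X Y : D} [HasRightDual X] [HasRightDual Y]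
    {f : X ⟶ Y} {g : Yᘁ ⟶ Xᘁ} (h : η_ Y Yᘁ ≫ Y ◁ g = η_ X Xᘁ ≫ f ▷ Xᘁ) : g = fᘁ := by
  rw [← coevaluation_comp_rightAdjointMate] at h
  simpa using congrArg (tensorLeftHomEquiv _ Y Yᘁ _).symm h

theorem rightAdjointMate_injective {X Y : D} [HasRightDual X] [HasRightDual Y] :
    Function.Injective fun f : X ⟶ Y => fᘁ := by
  intro f g (h : fᘁ = gᘁ)
  have eval_eq : Yᘁ ◁ f ≫ ε_ Y Yᘁ = Yᘁ ◁ g ≫ ε_ Y Yᘁ := by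
    rw [← rightAdjointMate_comp_evaluation, h, rightAdjointMate_comp_evaluation]
  have curry_eq (k : X ⟶ Y) :
      tensorLeftHomEquiv X Y Yᘁ (𝟙_ D) (Yᘁ ◁ k ≫ ε_ Y Yᘁ) = k ≫ (ρ_ Y).inv :=
    tensorLeftHomEquiv_whiskerLeft_comp_evaluation (Z := Yᘁ) k
  rw [← cancel_mono (ρ_ Y).inv, ← curry_eq, ← curry_eq, eval_eq]

theorem rightClosure_whiskerRight_comp_evaluation {U U' V V' W W' : D} [ExactPairing U U']
    [ExactPairing V V'] [ExactPairing W W'] (c : 𝟙_ D ⟶ U' ⊗ U) {f : U ⊗ V ⟶ U ⊗ W}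
    {g : W' ⊗ U' ⟶ V' ⊗ U'}
    (h : g ▷ (U ⊗ V) ≫ ε_ (U ⊗ V) (V' ⊗ U') = (W' ⊗ U') ◁ f ≫ ε_ (U ⊗ W) (W' ⊗ U')) :
    rightClosure c (ε_ U U') g ▷ V ≫ ε_ V V' =
      W' ◁ leftClosure c (ε_ U U') f ≫ ε_ W W' := by
  rw [ExactPairing.tensor_evaluation, ExactPairing.tensor_evaluation] at h
  calc
    _ = 𝟙 _ ⊗≫ W' ◁ c ▷ V ⊗≫ (g ▷ (U ⊗ V) ≫ (𝟙 _ ⊗≫ V' ◁ ε_ U U' ▷ V ⊗≫ ε_ V V')) := by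
      dsimp only [rightClosure]; monoidal
    _ = _ := by rw [h]; dsimp only [leftClosure]; monoidal

theorem coevaluation_comp_whiskerLeft_leftClosure {U U' V V' W W' : D} [ExactPairing U U']
    [ExactPairing V V'] [ExactPairing W W'] (e : V ⊗ V' ⟶ 𝟙_ D) {f : U ⊗ V ⟶ W ⊗ V}
    {g : V' ⊗ W' ⟶ V' ⊗ U'}
    (h : η_ (W ⊗ V) (V' ⊗ W') ≫ (W ⊗ V) ◁ g = η_ (U ⊗ V) (V' ⊗ U') ≫ f ▷ (V' ⊗ U')) :
    η_ W W' ≫ W ◁ leftClosure (η_ V V') e g =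
      η_ U U' ≫ rightClosure (η_ V V') e f ▷ U' := by
  rw [ExactPairing.tensor_coevaluation, ExactPairing.tensor_coevaluation] at h
  calc
    _ = ((η_ W W' ⊗≫ (W ◁ η_ V V') ▷ W' ⊗≫ 𝟙 _) ≫ (W ⊗ V) ◁ g) ⊗≫ W ◁ e ▷ U' ⊗≫ 𝟙 _ := by
      dsimp only [leftClosure]; monoidal
    _ = _ := by rw [h]; dsimp only [rightClosure]; monoidal

attribute [local instance] hasRightDualTensor

theorem rightAdjointMate_leftClosure {U V W : D} [HasRightDual U] [HasRightDual V]
    [HasRightDual W] (c : 𝟙_ D ⟶ Uᘁ ⊗ U) (f : U ⊗ V ⟶ U ⊗ W) :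
    (leftClosure c (ε_ U Uᘁ) f)ᘁ = rightClosure c (ε_ U Uᘁ) (rightAdjointMate f) :=
  (eq_rightAdjointMate_of_evaluation <|
    rightClosure_whiskerRight_comp_evaluation c (rightAdjointMate_comp_evaluation f)).symm

theorem rightAdjointMate_rightClosure {U V W : D} [HasRightDual U] [HasRightDual V]
    [HasRightDual W] (e : V ⊗ Vᘁ ⟶ 𝟙_ D) (f : U ⊗ V ⟶ W ⊗ V) :
    (rightClosure (η_ V Vᘁ) e f)ᘁ = leftClosure (η_ V Vᘁ) e (rightAdjointMate f) :=
  (eq_rightAdjointMate_of_coevaluation <|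
    coevaluation_comp_whiskerLeft_leftClosure e (coevaluation_comp_rightAdjointMate f)).symm

/-- The ambidexterity condition on `X` in a monoidal category without braiding or twist: `Y` is
both a right and a left dual of `X`, and closing either factor of an endomorphism of `X ⊗ X`
along these two pairings gives the same result. -/
def IsAmbidextrousPairing (X Y : D) [ExactPairing X Y] [ExactPairing Y X] : Prop :=
  ∀ f : X ⊗ X ⟶ X ⊗ X,
    leftClosure (η_ Y X) (ε_ X Y) f = rightClosure (η_ X Y) (ε_ Y X) f

theorem IsAmbidextrousPairing.symm {X Y : D} [ExactPairing X Y] [ExactPairing Y X]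
    (h : IsAmbidextrousPairing X Y) : IsAmbidextrousPairing Y X := by
  intro f
  let _ : HasRightDual Y := ⟨X⟩
  apply rightAdjointMate_injective
  calc
    rightAdjointMate (leftClosure (η_ X Y) (ε_ Y X) f)
    _ = rightClosure (η_ X Y) (ε_ Y X) (rightAdjointMate f) := rightAdjointMate_leftClosure _ f
    _ = leftClosure (η_ Y X) (ε_ X Y) (rightAdjointMate f) := (h _).symm
    _ = rightAdjointMate (rightClosure (η_ Y X) (ε_ X Y) f) :=
      (rightAdjointMate_rightClosure _ f).symm

end Transposition

section Twist

variable {D : Type*} [Category D] [MonoidalCategory D] [BraidedCategory D]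
  [RightRigidCategory D] (S : Twist D)

attribute [local instance] Twist.isIso

theorem Twist.θ_unit : S.θ (𝟙_ D) = 𝟙 (𝟙_ D) := by
  have braiding_eq : (β_ (𝟙_ D) (𝟙_ D)).hom = 𝟙 _ := by
    rw [braiding_tensorUnit_left, unitors_equal, Iso.hom_inv_id]
  have tensor_eq : S.θ (𝟙_ D ⊗ 𝟙_ D) = 𝟙_ D ◁ S.θ (𝟙_ D) ≫ S.θ (𝟙_ D) ▷ 𝟙_ D := by
    rw [S.tensor, braiding_eq, Category.comp_id, Category.comp_id, tensorHom_def']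
  have square_eq : S.θ (𝟙_ D) ≫ S.θ (𝟙_ D) = S.θ (𝟙_ D) := by
    have h := S.natural (λ_ (𝟙_ D)).hom
    rw [tensor_eq] at h
    simpa [unitors_equal, unitors_inv_equal] using h.symm
  exact (cancel_epi (S.θ (𝟙_ D))).1 (square_eq.trans (Category.comp_id _).symm)

theorem Twist.coevaluation_θ (V : D) :
    η_ V Vᘁ ≫ (S.θ V ⊗ₘ S.θ Vᘁ) ≫ (β_ V Vᘁ).hom ≫ (β_ Vᘁ V).hom = η_ V Vᘁ := by
  rw [← S.tensor, S.natural, S.θ_unit, Category.id_comp]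

theorem Twist.θ_evaluation (V : D) :
    (S.θ Vᘁ ⊗ₘ S.θ V) ≫ (β_ Vᘁ V).hom ≫ (β_ V Vᘁ).hom ≫ ε_ V Vᘁ = ε_ V Vᘁ := by
  have h := S.natural (ε_ V Vᘁ)
  rw [S.tensor, S.θ_unit, Category.comp_id] at h
  simpa only [Category.assoc] using h.symm

theorem bP_eq_comp_inv_θ (V : D) :
    bP S V = (η_ V Vᘁ ≫ (β_ Vᘁ V).inv) ≫ inv (S.θ Vᘁ) ▷ V := by
  rw [← cancel_mono (S.θ Vᘁ ▷ V), ← cancel_mono (β_ Vᘁ V).hom]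
  conv_rhs => rw [← S.coevaluation_θ V]
  simp [bP, MonoidalCategory.tensorHom_def]

theorem dP_eq_θ_dual_comp (V : D) :
    dP S V = V ◁ S.θ Vᘁ ≫ (β_ V Vᘁ).hom ≫ ε_ V Vᘁ := by
  rw [dP, tensorHom_id, BraidedCategory.braiding_naturality_right_assoc,
    BraidedCategory.braiding_naturality_left_assoc, S.dual, rightAdjointMate_comp_evaluation]

/-- The twisted cup and cap `b'_V`, `d'_V` exhibit `V` as a right dual of `Vᘁ`. -/
noncomputable abbrev twistedPairing (V : D) : ExactPairing Vᘁ V :=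
  let p : ExactPairing Vᘁ V :=
    @exactPairingCongrLeft _ _ _ _ _ _ (BraidedCategory.exactPairing_swap V Vᘁ) (asIso (S.θ Vᘁ))
  { coevaluation' := bP S V
    evaluation' := dP S V
    coevaluation_evaluation' := by
      rw [bP_eq_comp_inv_θ, dP_eq_θ_dual_comp]
      exact p.coevaluation_evaluation'
    evaluation_coevaluation' := by
      rw [bP_eq_comp_inv_θ, dP_eq_θ_dual_comp]
      exact p.evaluation_coevaluation' }

/-- The identification of `V` with its double dual, both being right duals of `Vᘁ`. -/
noncomputable def doubleDualIso (V : D) : V ≅ (Vᘁ)ᘁ :=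
  rightDualIso (twistedPairing S V) HasRightDual.exact

theorem bP_comp_doubleDualIso_hom (V : D) :
    bP S V ≫ Vᘁ ◁ (doubleDualIso S V).hom = η_ Vᘁ (Vᘁ)ᘁ := by
  let _ := twistedPairing S V
  have h := @coevaluation_comp_rightAdjointMate _ _ _ Vᘁ Vᘁ _ ⟨V⟩ (𝟙 Vᘁ)
  rwa [id_whiskerRight, Category.comp_id] at h

theorem doubleDualIso_inv_comp_dP (V : D) :
    (doubleDualIso S V).inv ▷ Vᘁ ≫ dP S V = ε_ Vᘁ (Vᘁ)ᘁ := by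
  let _ := twistedPairing S V
  have h := @rightAdjointMate_comp_evaluation _ _ _ Vᘁ Vᘁ ⟨V⟩ _ (𝟙 Vᘁ)
  rwa [whiskerLeft_id, Category.id_comp] at h

theorem coevaluation_comp_doubleDualIso_hom (V : D) :
    η_ V Vᘁ ≫ (doubleDualIso S V).hom ▷ Vᘁ = bP S Vᘁ := by
  conv_lhs => rw [← S.coevaluation_θ V]
  rw [bP, ← bP_comp_doubleDualIso_hom S]
  simp [bP, MonoidalCategory.tensorHom_def, whisker_exchange]

theorem doubleDualIso_inv_comp_evaluation (V : D) :
    Vᘁ ◁ (doubleDualIso S V).inv ≫ ε_ V Vᘁ = dP S Vᘁ := by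
  conv_lhs => rw [← S.θ_evaluation V]
  rw [dP, ← doubleDualIso_inv_comp_dP S]
  simp [dP, MonoidalCategory.tensorHom_def, whisker_exchange_assoc]

theorem ptrL_dual {U V : D} (f : Vᘁ ⊗ U ⟶ Vᘁ ⊗ U) :
    ptrL S f = leftClosure (η_ V Vᘁ) (dP S V) f := by
  rw [← leftClosure_whiskerRight_iso (doubleDualIso S V), coevaluation_comp_doubleDualIso_hom,
    doubleDualIso_inv_comp_dP]
  rfl

theorem ptrR_dual {U V : D} (f : U ⊗ Vᘁ ⟶ U ⊗ Vᘁ) :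
    ptrR S f = rightClosure (bP S V) (ε_ V Vᘁ) f := by
  rw [← rightClosure_whiskerLeft_iso (doubleDualIso S V), bP_comp_doubleDualIso_hom,
    doubleDualIso_inv_comp_evaluation]
  rfl

theorem ambidextrous_iff_isAmbidextrousPairing (V : D) :
    Ambidextrous S V ↔ letI := twistedPairing S V; IsAmbidextrousPairing V Vᘁ :=
  Iff.rfl

theorem ambidextrous_dual_iff_isAmbidextrousPairing (V : D) :
    Ambidextrous S Vᘁ ↔ letI := twistedPairing S V; IsAmbidextrousPairing Vᘁ V :=
  forall_congr' fun f => by rw [ptrL_dual, ptrR_dual]; rfl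

theorem statement11_general (J : D) : Ambidextrous S Jᘁ ↔ Ambidextrous S J := by
  let _ := twistedPairing S J
  exact (ambidextrous_dual_iff_isAmbidextrousPairing S J).trans <|
    Iff.trans ⟨IsAmbidextrousPairing.symm, IsAmbidextrousPairing.symm⟩
      (ambidextrous_iff_isAmbidextrousPairing S J).symm

end Twist

/-- If `J` is ambidextrous, then so is its dual `J*`. -/
theorem statement11 (J : C) (h : Ambidextrous T J) : Ambidextrous T (Jᘁ) :=
  (statement11_general T J).2 h

end RibbonPaper
end
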